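/- Let n ≥ 1 be an integer. There exists a constant K > 0, depending only on n, with the following property. Let s ∈ (0,1), let f ∈ L²(Ω), let λ > I, let u be a weak solution of the fractional Laplacian problem and ũ a weak solution of the truncated nonlocal problem, both with the same data f, and assume C₁ > 0 is such that C₁·‖v‖_{H^s(Ω∪Ω_I)} ≤ |||v||| for every test function v. If ũ_N : ℝⁿ → ℝ is a measurable function and E ≥ 0 satisfies ‖ũ − ũ_N‖_{H^s(Ω∪Ω_I)} ≤ E, then ‖u − ũ_N‖_{H^s(Ω∪Ω_I)} ≤ (K/(C₁²·s·(λ−I)^{2s}))·‖u‖_{L²(Ω)} + E. -/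

import Mathlib

open MeasureTheory Real Set

noncomputable section

abbrev Eucl (n : ℕ) := EuclideanSpace ℝ (Fin n)

/-- The normalizing constant `c_{n,s}` of the fractional Laplacian. -/
def cns (n : ℕ) (s : ℝ) : ℝ :=
  s * (2 : ℝ) ^ (2 * s) * Real.Gamma ((n + 2) / 2) /
    (Real.Gamma (1 / 2) * Real.Gamma (1 - s))

/-- The interaction domain `Ω_I = {y ∈ ℝⁿ∖Ω : |y−x| < λ for some x ∈ Ω}`. -/
def interDom {n : ℕ} (Ω : Set (Eucl n)) (lam : ℝ) : Set (Eucl n) :=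
  {y | y ∉ Ω ∧ ∃ x ∈ Ω, ‖y - x‖ < lam}

/-- The bilinear form `B_S(u,v) = ∬_S (u(y)−u(x))(v(y)−v(x))/|y−x|^{n+2s} dy dx`. -/
def Bform {n : ℕ} (s : ℝ) (S : Set (Eucl n × Eucl n)) (u v : Eucl n → ℝ) : ℝ :=
  ∫ p in S, (u p.2 - u p.1) * (v p.2 - v p.1) / ‖p.2 - p.1‖ ^ ((n : ℝ) + 2 * s)

/-- `T = {(x,y) ∈ (Ω∪Ω_I)×(Ω∪Ω_I) : |y−x| < λ}`. -/
def Tset {n : ℕ} (Ω : Set (Eucl n)) (lam : ℝ) : Set (Eucl n × Eucl n) :=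
  {p | p.1 ∈ Ω ∪ interDom Ω lam ∧ p.2 ∈ Ω ∪ interDom Ω lam ∧ ‖p.2 - p.1‖ < lam}

/-- The energy seminorm `|||v||| = ((c_{n,s}/4)·B_T(v,v))^{1/2}`. -/
def energyNorm {n : ℕ} (s : ℝ) (Ω : Set (Eucl n)) (lam : ℝ) (v : Eucl n → ℝ) : ℝ :=
  Real.sqrt (cns n s / 4 * Bform s (Tset Ω lam) v v)

/-- The `H^s(D)` norm `(∫_D v² + B_{D×D}(v,v))^{1/2}`. -/
def HsNorm {n : ℕ} (s : ℝ) (D : Set (Eucl n)) (v : Eucl n → ℝ) : ℝ :=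
  Real.sqrt ((∫ x in D, v x ^ 2) + Bform s (D ×ˢ D) v v)

/-- The `L²(Ω)` norm. -/
def L2NormOn {n : ℕ} (Ω : Set (Eucl n)) (v : Eucl n → ℝ) : ℝ :=
  Real.sqrt (∫ x in Ω, v x ^ 2)

/-- The integrand of `B_S(u,v)`. -/
def gagIntegrand {n : ℕ} (s : ℝ) (u v : Eucl n → ℝ) : Eucl n × Eucl n → ℝ :=
  fun p => (u p.2 - u p.1) * (v p.2 - v p.1) / ‖p.2 - p.1‖ ^ ((n : ℝ) + 2 * s)

/-- A test function: measurable, square-integrable, vanishing a.e. off `Ω`,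
with finite Gagliardo energy. -/
def IsTestFun {n : ℕ} (s : ℝ) (Ω : Set (Eucl n)) (v : Eucl n → ℝ) : Prop :=
  Measurable v ∧ Integrable (fun x => v x ^ 2) ∧ (∀ᵐ x ∂volume, x ∉ Ω → v x = 0) ∧
    Integrable (fun p : Eucl n × Eucl n =>
      (v p.2 - v p.1) ^ 2 / ‖p.2 - p.1‖ ^ ((n : ℝ) + 2 * s))

/-- Weak solution of the fractional Laplacian problem with data `f`. -/
def IsFracSol {n : ℕ} (s : ℝ) (Ω : Set (Eucl n)) (f u : Eucl n → ℝ) : Prop :=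
  IsTestFun s Ω u ∧ ∀ v, IsTestFun s Ω v →
    Integrable (gagIntegrand s u v) ∧
    cns n s / 2 * Bform s Set.univ u v = ∫ x in Ω, f x * v x

/-- Weak solution of the truncated nonlocal problem with data `f`. -/
def IsTruncSol {n : ℕ} (s : ℝ) (Ω : Set (Eucl n)) (lam : ℝ) (f u : Eucl n → ℝ) : Prop :=
  IsTestFun s Ω u ∧ ∀ v, IsTestFun s Ω v →
    IntegrableOn (gagIntegrand s u v) (Tset Ω lam) ∧
    cns n s / 2 * Bform s (Tset Ω lam) u v = ∫ x in Ω, f x * v x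

lemma aux_cs {α : Type*} [MeasurableSpace α] (μ : Measure α) {a b : α → ℝ}
    (ha : MemLp a 2 μ) (hb : MemLp b 2 μ) :
    ∫ x, |a x * b x| ∂μ ≤ √(∫ x, a x ^ 2 ∂μ) * √(∫ x, b x ^ 2 ∂μ) := by
  have h := integral_mul_le_Lp_mul_Lq_of_nonneg (μ := μ) Real.HolderConjugate.two_two
    (f := fun x => |a x|) (g := fun x => |b x|)
    (Filter.Eventually.of_forall fun x => abs_nonneg _)
    (Filter.Eventually.of_forall fun x => abs_nonneg _)
    (by simpa using ha.norm) (by simpa using hb.norm)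
  simpa [abs_mul, Real.sqrt_eq_rpow] using h

lemma aux_mink {α : Type*} [MeasurableSpace α] (μ : Measure α) {a b : α → ℝ}
    (ha : MemLp a 2 μ) (hbm : AEStronglyMeasurable b μ) :
    √(∫ x, (a x + b x) ^ 2 ∂μ) ≤ √(∫ x, a x ^ 2 ∂μ) + √(∫ x, b x ^ 2 ∂μ) := by
  by_cases hb : MemLp b 2 μ
  · have hcs := aux_cs μ ha hb
    have hA : 0 ≤ ∫ x, a x ^ 2 ∂μ := integral_nonneg fun x => sq_nonneg _
    have hB : 0 ≤ ∫ x, b x ^ 2 ∂μ := integral_nonneg fun x => sq_nonneg _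
    have hab : Integrable (fun x => a x * b x) μ := ha.integrable_mul hb
    have hle : ∫ x, a x * b x ∂μ ≤ ∫ x, |a x * b x| ∂μ :=
      integral_mono hab hab.abs fun x => le_abs_self _
    have hexp : ∫ x, (a x + b x) ^ 2 ∂μ =
        (∫ x, a x ^ 2 ∂μ) + 2 * (∫ x, a x * b x ∂μ) + ∫ x, b x ^ 2 ∂μ := by
      rw [← integral_const_mul, ← integral_add' ha.integrable_sq (hab.const_mul 2),
        ← integral_add' (ha.integrable_sq.add (hab.const_mul 2)) hb.integrable_sq]
      refine integral_congr_ae (Filter.Eventually.of_forall fun x => ?_)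
      simp only [Pi.add_apply]
      ring
    apply Real.sqrt_le_iff.2
    refine ⟨by positivity, ?_⟩
    rw [hexp]
    nlinarith [Real.sq_sqrt hA, Real.sq_sqrt hB]
  · have h : ¬ Integrable (fun x => (a x + b x) ^ 2) μ := by
      intro h
      apply hb
      have h2 : MemLp (fun x => a x + b x) 2 μ :=
        (memLp_two_iff_integrable_sq (ha.1.add hbm)).2 h
      have := h2.sub ha
      convert this using 1
      ext x; simp
    rw [integral_undef h, Real.sqrt_zero]
    positivity

lemma aux_mink2 {a b c d e f : ℝ} (ha : 0 ≤ a) (hb : 0 ≤ b) (hc : 0 ≤ c) (hd : 0 ≤ d)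
    (he : 0 ≤ e) (hf : 0 ≤ f)
    (h1 : √a ≤ √c + √e) (h2 : √b ≤ √d + √f) :
    √(a + b) ≤ √(c + d) + √(e + f) := by
  have hcd := Real.sq_sqrt (add_nonneg hc hd)
  have hef := Real.sq_sqrt (add_nonneg he hf)
  have sa := Real.sq_sqrt ha
  have sb := Real.sq_sqrt hb
  have sc := Real.sq_sqrt hc
  have sd := Real.sq_sqrt hd
  have se := Real.sq_sqrt he
  have sf := Real.sq_sqrt hf
  have p1 := Real.sqrt_nonneg a
  have p2 := Real.sqrt_nonneg b
  have p3 := Real.sqrt_nonneg c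
  have p4 := Real.sqrt_nonneg d
  have p5 := Real.sqrt_nonneg e
  have p6 := Real.sqrt_nonneg f
  have key : √c * √e + √d * √f ≤ √(c + d) * √(e + f) := by
    rw [← Real.sqrt_mul (add_nonneg hc hd)]
    apply Real.le_sqrt_of_sq_le
    nlinarith [sq_nonneg (√c * √f - √d * √e), mul_nonneg hc he]
  apply Real.sqrt_le_iff.2
  refine ⟨by positivity, ?_⟩
  have q1 : a ≤ (√c + √e) ^ 2 := by nlinarith
  have q2 : b ≤ (√d + √f) ^ 2 := by nlinarith
  nlinarith

/-- The Gagliardo difference quotient, so that the energy is its squared `L²` norm. -/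
def gq {n : ℕ} (s : ℝ) (w : Eucl n → ℝ) : Eucl n × Eucl n → ℝ :=
  fun p => (w p.2 - w p.1) / √(‖p.2 - p.1‖ ^ ((n : ℝ) + 2 * s))

lemma gq_mul {n : ℕ} (s : ℝ) (w v : Eucl n → ℝ) (p : Eucl n × Eucl n) :
    gq s w p * gq s v p =
      (w p.2 - w p.1) * (v p.2 - v p.1) / ‖p.2 - p.1‖ ^ ((n : ℝ) + 2 * s) := by
  unfold gq
  rw [div_mul_div_comm, Real.mul_self_sqrt (by positivity)]

lemma gq_meas {n : ℕ} (s : ℝ) {w : Eucl n → ℝ} (hw : Measurable w) : Measurable (gq s w) := by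
  unfold gq
  fun_prop

lemma gq_add {n : ℕ} (s : ℝ) (w v : Eucl n → ℝ) (p : Eucl n × Eucl n) :
    gq s (w + v) p = gq s w p + gq s v p := by
  simp only [gq, Pi.add_apply]
  ring

lemma Bform_eq {n : ℕ} (s : ℝ) (S : Set (Eucl n × Eucl n)) (w : Eucl n → ℝ) :
    Bform s S w w = ∫ p in S, gq s w p ^ 2 := by
  unfold Bform
  simp only [← gq_mul, sq]

lemma test_memLp {n : ℕ} {s : ℝ} {Ω : Set (Eucl n)} {v : Eucl n → ℝ} (h : IsTestFun s Ω v) :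
    MemLp v 2 volume ∧ MemLp (gq s v) 2 volume := by
  obtain ⟨h1, h2, h3, h4⟩ := h
  refine ⟨(memLp_two_iff_integrable_sq h1.aestronglyMeasurable).2 h2,
    (memLp_two_iff_integrable_sq (gq_meas s h1).aestronglyMeasurable).2 ?_⟩
  refine h4.congr (Filter.Eventually.of_forall fun p => ?_)
  simp only [sq, gq_mul]

lemma test_sub {n : ℕ} {s : ℝ} {Ω : Set (Eucl n)} {v w : Eucl n → ℝ} (h : IsTestFun s Ω v)
    (h' : IsTestFun s Ω w) : IsTestFun s Ω (v - w) := by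
  have a := test_memLp h
  have b := test_memLp h'
  refine ⟨h.1.sub h'.1, (a.1.sub b.1).integrable_sq, ?_, ?_⟩
  · filter_upwards [h.2.2.1, h'.2.2.1] with x hx hx' hxo
    simp [hx hxo, hx' hxo]
  · convert (a.2.sub b.2).integrable_sq using 2 with p
    have : (gq s v - gq s w) p = gq s (v - w) p := by
      simp only [gq, Pi.sub_apply]; ring
    rw [this, sq (gq s (v - w) p), gq_mul, sq]

lemma Hs_tri {n : ℕ} {s : ℝ} {Ω : Set (Eucl n)} (D : Set (Eucl n)) {v w : Eucl n → ℝ}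
    (h : IsTestFun s Ω v) (hw : Measurable w) :
    HsNorm s D (v + w) ≤ HsNorm s D v + HsNorm s D w := by
  unfold HsNorm
  simp only [Bform_eq]
  have a := test_memLp h
  apply aux_mink2 <;> try exact integral_nonneg fun x => sq_nonneg _
  · exact aux_mink _ (a.1.restrict D) hw.aestronglyMeasurable
  · simp only [gq_add]
    exact aux_mink _ (a.2.restrict _) (gq_meas s hw).aestronglyMeasurable

/-- truncated kernel -/
def kern (n : ℕ) (s lam : ℝ) (r : ℝ) : ℝ :=
  (Ici lam).indicator (fun r => r ^ (-((n : ℝ) + 2 * s))) r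

lemma kern_nonneg {n : ℕ} {s lam : ℝ} {r : ℝ} (hr : 0 ≤ r) : 0 ≤ kern n s lam r := by
  unfold kern
  rw [indicator_apply]
  split_ifs
  · positivity
  · exact le_rfl

lemma kern_radial {n : ℕ} (hn : 1 ≤ n) {s lam : ℝ} (hs : 0 < s) (hl : 0 < lam) :
    ∀ y ∈ Ioi (0 : ℝ), y ^ (n - 1) • kern n s lam y =
      (Ici lam).indicator (fun r => r ^ (-1 - 2 * s)) y := by
  intro y hy
  have hy : 0 < y := hy
  unfold kern
  simp only [indicator_apply, smul_eq_mul]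
  split_ifs
  · rw [← Real.rpow_natCast, ← Real.rpow_add hy]
    congr 1
    push_cast [Nat.cast_sub hn]
    ring
  · simp

lemma kern_int {n : ℕ} (hn : 1 ≤ n) {s lam : ℝ} (hs : 0 < s) (hl : 0 < lam) :
    Integrable (fun z : Eucl n => kern n s lam ‖z‖) ∧
    ∫ z : Eucl n, kern n s lam ‖z‖ =
      n * (volume : Measure (Eucl n)).real (Metric.ball 0 1) * (lam ^ (-(2 * s)) / (2 * s)) := by
  haveI : Nontrivial (Eucl n) := by
    haveI : Nonempty (Fin n) := ⟨⟨0, hn⟩⟩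
    infer_instance
  have hfr : Module.finrank ℝ (Eucl n) = n := by simp
  constructor
  · rw [integrable_fun_norm_addHaar, hfr]
    rw [integrableOn_congr_fun (kern_radial hn hs hl) measurableSet_Ioi]
    apply Integrable.integrableOn
    rw [integrable_indicator_iff measurableSet_Ici, integrableOn_Ici_iff_integrableOn_Ioi]
    exact integrableOn_Ioi_rpow_of_lt (by linarith) hl
  · rw [integral_fun_norm_addHaar, hfr]
    rw [setIntegral_congr_fun measurableSet_Ioi (kern_radial hn hs hl)]
    rw [setIntegral_indicator measurableSet_Ici]
    have : Ioi (0 : ℝ) ∩ Ici lam = Ici lam := by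
      apply inter_eq_right.2
      intro x hx
      exact lt_of_lt_of_le hl hx
    rw [this, integral_Ici_eq_integral_Ioi, integral_Ioi_rpow_of_lt (by linarith) hl]
    rw [show -1 - 2 * s + 1 = -(2 * s) by ring, nsmul_eq_mul, smul_eq_mul, neg_div_neg_eq]
    ring

lemma kern_prod {n : ℕ} {k g : Eucl n → ℝ} (hk : Integrable k) (hg : Integrable g) :
    Integrable (fun p : Eucl n × Eucl n => g p.1 * k (p.2 - p.1)) ∧
    ∫ p : Eucl n × Eucl n, g p.1 * k (p.2 - p.1) = (∫ x, g x) * ∫ x, k x := by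
  have h1 : Integrable (fun p : Eucl n × Eucl n => g p.1 * k (p.2 - p.1)) := by
    have := (Integrable.convolution_integrand (μ := (volume : Measure (Eucl n)))
      (ν := (volume : Measure (Eucl n))) (ContinuousLinearMap.mul ℝ ℝ) hg hk).swap
    exact this
  refine ⟨h1, ?_⟩
  rw [Measure.volume_eq_prod] at h1 ⊢
  rw [integral_prod _ h1]
  simp only [integral_const_mul, integral_sub_right_eq_self]
  rw [integral_mul_const]

lemma D_open {n : ℕ} {Ω : Set (Eucl n)} {lam : ℝ} (hΩ : IsOpen Ω) :
    IsOpen (Ω ∪ interDom Ω lam) := by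
  have : Ω ∪ interDom Ω lam = Ω ∪ ⋃ x ∈ Ω, Metric.ball x lam := by
    ext y
    simp only [interDom, mem_union, mem_ofPred_eq, mem_iUnion, Metric.mem_ball, dist_eq_norm,
      exists_prop]
    tauto
  rw [this]
  exact hΩ.union (isOpen_biUnion fun x _ => Metric.isOpen_ball)

lemma T_meas {n : ℕ} {Ω : Set (Eucl n)} {lam : ℝ} (hΩ : IsOpen Ω) :
    MeasurableSet (Tset Ω lam) := by
  have h := D_open (lam := lam) hΩ
  apply IsOpen.measurableSet
  unfold Tset
  have h3 : IsOpen {p : Eucl n × Eucl n | ‖p.2 - p.1‖ < lam} :=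
    isOpen_lt (by fun_prop) continuous_const
  exact (h.preimage continuous_fst).inter ((h.preimage continuous_snd).inter h3)

/-- Bound of the far-field part of the form. -/
lemma far_bound {n : ℕ} (hn : 1 ≤ n) {s lam : ℝ} (hs : 0 < s) {Ω : Set (Eucl n)}
    (hΩ : IsOpen Ω) (hb : Bornology.IsBounded Ω) (hl : Metric.diam Ω < lam)
    {u e : Eucl n → ℝ} (hu : IsTestFun s Ω u) (he : IsTestFun s Ω e) :
    |∫ p in (Tset Ω lam)ᶜ, gagIntegrand s u e p| ≤
      2 * (L2NormOn Ω u * L2NormOn Ω e) *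
        (n * (volume : Measure (Eucl n)).real (Metric.ball 0 1) *
          (lam ^ (-(2 * s)) / (2 * s))) := by
  have hl0 : 0 < lam := lt_of_le_of_lt Metric.diam_nonneg hl
  obtain ⟨hk, hkv⟩ := kern_int hn hs hl0
  have hue : Integrable (fun x => |u x * e x|) :=
    ((test_memLp hu).1.integrable_mul (test_memLp he).1).abs
  obtain ⟨hp, hpv⟩ := kern_prod hk hue
  have hps : Integrable (fun p : Eucl n × Eucl n =>
      |u p.2 * e p.2| * kern n s lam ‖p.1 - p.2‖) := by
    rw [Measure.volume_eq_prod] at hp ⊢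
    exact hp.swap
  have hpsv : ∫ p : Eucl n × Eucl n, |u p.2 * e p.2| * kern n s lam ‖p.1 - p.2‖ =
      ∫ p : Eucl n × Eucl n, |u p.1 * e p.1| * kern n s lam ‖p.2 - p.1‖ := by
    rw [Measure.volume_eq_prod]
    exact integral_prod_swap (fun p : Eucl n × Eucl n =>
      |u p.1 * e p.1| * kern n s lam ‖p.2 - p.1‖)
  have hL2 : ∀ w : Eucl n → ℝ, IsTestFun s Ω w → √(∫ x, w x ^ 2) = L2NormOn Ω w := by
    intro w hw
    unfold L2NormOn
    rw [setIntegral_eq_integral_of_ae_compl_eq_zero]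
    filter_upwards [hw.2.2.1] with x hx hxo
    simp [hx hxo]
  have hcs := aux_cs volume (test_memLp hu).1 (test_memLp he).1
  rw [hL2 u hu, hL2 e he] at hcs
  have hκ : 0 ≤ n * (volume : Measure (Eucl n)).real (Metric.ball 0 1) *
          (lam ^ (-(2 * s)) / (2 * s)) := by positivity
  have hz : ∀ᵐ x ∂(volume : Measure (Eucl n)), x ∉ Ω → u x = 0 ∧ e x = 0 := by
    filter_upwards [hu.2.2.1, he.2.2.1] with x h1 h2 hx using ⟨h1 hx, h2 hx⟩
  have hz1 : ∀ᵐ p ∂(volume : Measure (Eucl n × Eucl n)),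
      p.1 ∉ Ω → u p.1 = 0 ∧ e p.1 = 0 :=
    Measure.quasiMeasurePreserving_fst.ae hz
  have hz2 : ∀ᵐ p ∂(volume : Measure (Eucl n × Eucl n)),
      p.2 ∉ Ω → u p.2 = 0 ∧ e p.2 = 0 :=
    Measure.quasiMeasurePreserving_snd.ae hz
  have hmain : |∫ p in (Tset Ω lam)ᶜ, gagIntegrand s u e p| ≤
      ∫ p in (Tset Ω lam)ᶜ, (|u p.1 * e p.1| * kern n s lam ‖p.2 - p.1‖ +
        |u p.2 * e p.2| * kern n s lam ‖p.1 - p.2‖) := by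
    rw [← Real.norm_eq_abs]
    apply norm_integral_le_of_norm_le (hp.add hps).integrableOn
    rw [ae_restrict_iff' (T_meas hΩ).compl]
    filter_upwards [hz1, hz2] with p h1 h2 hpT
    have hk1 : 0 ≤ kern n s lam ‖p.2 - p.1‖ := kern_nonneg (norm_nonneg _)
    have hk2 : 0 ≤ kern n s lam ‖p.1 - p.2‖ := kern_nonneg (norm_nonneg _)
    have hkv : lam ≤ ‖p.2 - p.1‖ →
        kern n s lam ‖p.2 - p.1‖ = (‖p.2 - p.1‖ ^ ((n : ℝ) + 2 * s))⁻¹ := by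
      intro h
      unfold kern
      rw [indicator_of_mem (show ‖p.2 - p.1‖ ∈ Ici lam from h), Real.rpow_neg (norm_nonneg _)]
    have hden : 0 ≤ ‖p.2 - p.1‖ ^ ((n : ℝ) + 2 * s) := by positivity
    rw [Real.norm_eq_abs]
    unfold gagIntegrand
    simp only [Pi.add_apply]
    rw [abs_div, abs_of_nonneg hden, div_eq_mul_inv]
    by_cases m1 : p.1 ∈ Ω
    · have hge : lam ≤ ‖p.2 - p.1‖ := by
        by_contra! hlt
        apply hpT
        refine ⟨Or.inl m1, ?_, hlt⟩
        by_cases m2 : p.2 ∈ Ω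
        · exact Or.inl m2
        · exact Or.inr ⟨m2, p.1, m1, hlt⟩
      have m2 : p.2 ∉ Ω := by
        intro m2
        have := Metric.dist_le_diam_of_mem hb m2 m1
        rw [dist_eq_norm] at this
        linarith
      obtain ⟨a, b⟩ := h2 m2
      rw [a, b, hkv hge]
      simp
    · obtain ⟨a, b⟩ := h1 m1
      rw [a, b]
      by_cases m2 : p.2 ∈ Ω
      · have hge : lam ≤ ‖p.2 - p.1‖ := by
          by_contra! hlt
          apply hpT
          refine ⟨Or.inr ⟨m1, p.2, m2, ?_⟩, Or.inl m2, hlt⟩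
          rwa [norm_sub_rev]
        rw [norm_sub_rev p.1 p.2, hkv hge]
        simp
      · obtain ⟨a, b⟩ := h2 m2
        rw [a, b]
        simp
  refine hmain.trans ?_
  refine (setIntegral_le_integral (hp.add hps) (Filter.Eventually.of_forall fun p => ?_)).trans ?_
  · exact add_nonneg (mul_nonneg (abs_nonneg _) (kern_nonneg (norm_nonneg _)))
      (mul_nonneg (abs_nonneg _) (kern_nonneg (norm_nonneg _)))
  · rw [integral_add' hp hps, hpsv, hpv, hkv]
    nlinarith [mul_le_mul_of_nonneg_right hcs hκ]

lemma gamma_lower : ∃ m > (0 : ℝ), ∀ s ∈ Ioo (0 : ℝ) 1, m ≤ Real.Gamma (1 - s) := by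
  obtain ⟨x, hx, hmin⟩ := (isCompact_Icc (a := (1 : ℝ)) (b := 2)).exists_isMinOn
    ⟨1, by norm_num⟩ (f := Real.Gamma)
    (Real.differentiableOn_Gamma_Ioi.continuousOn.mono fun x hx => by
      have := hx.1
      simp only [mem_Ioi]; linarith)
  refine ⟨Real.Gamma x, Real.Gamma_pos_of_pos (by linarith [hx.1]), fun s hs => ?_⟩
  have h1 : 0 < 1 - s := by linarith [hs.2]
  have h2 : Real.Gamma x ≤ Real.Gamma (1 - s + 1) :=
    hmin (show 1 - s + 1 ∈ Icc (1 : ℝ) 2 from ⟨by linarith [hs.2], by linarith [hs.1]⟩)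
  rw [Real.Gamma_add_one h1.ne'] at h2
  have := Real.Gamma_pos_of_pos h1
  nlinarith [hs.1]

lemma cns_bound (n : ℕ) : ∃ M > (0 : ℝ), ∀ s ∈ Ioo (0 : ℝ) 1, 0 < cns n s ∧ cns n s ≤ M := by
  obtain ⟨m, hm, h⟩ := gamma_lower
  have g1 : 0 < Real.Gamma (((n : ℝ) + 2) / 2) := Real.Gamma_pos_of_pos (by positivity)
  have g2 : 0 < Real.Gamma (1 / 2) := Real.Gamma_pos_of_pos (by positivity)
  refine ⟨1 * (2 : ℝ) ^ (2 : ℝ) * Real.Gamma ((n + 2) / 2) / (Real.Gamma (1 / 2) * m),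
    by positivity, fun s hs => ?_⟩
  have g3 : 0 < Real.Gamma (1 - s) := lt_of_lt_of_le hm (h s hs)
  have hs0 := hs.1
  have hs1 := hs.2
  unfold cns
  refine ⟨by positivity, ?_⟩
  have := h s hs
  gcongr
  · norm_num
  · linarith

/-- For each dimension `n ≥ 1` there is a constant `K > 0`, depending
only on `n`, such that under the hypotheses of Statement 1 and given any measurable
`ũ_N` and `E ≥ 0` with `‖ũ − ũ_N‖_{H^s(Ω∪Ω_I)} ≤ E`, one has
`‖u − ũ_N‖_{H^s(Ω∪Ω_I)} ≤ (K/(C₁²·s·(λ−I)^{2s}))·‖u‖_{L²(Ω)} + E`. -/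
theorem stmt14 (n : ℕ) (hn : 1 ≤ n) :
    ∃ K > (0 : ℝ), ∀ (s : ℝ), s ∈ Set.Ioo (0 : ℝ) 1 →
      ∀ (Ω : Set (Eucl n)), Ω.Nonempty → IsOpen Ω → Bornology.IsBounded Ω →
      ∀ (lam : ℝ), Metric.diam Ω < lam →
      ∀ (f : Eucl n → ℝ), Measurable f → IntegrableOn (fun x => f x ^ 2) Ω →
      ∀ (u ut : Eucl n → ℝ),
        IsFracSol s Ω f u → IsTruncSol s Ω lam f ut →
      ∀ (C₁ : ℝ), 0 < C₁ →
        (∀ v, IsTestFun s Ω v →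
          C₁ * HsNorm s (Ω ∪ interDom Ω lam) v ≤ energyNorm s Ω lam v) →
      ∀ (utN : Eucl n → ℝ), Measurable utN →
      ∀ (E : ℝ), 0 ≤ E →
        HsNorm s (Ω ∪ interDom Ω lam) (ut - utN) ≤ E →
        HsNorm s (Ω ∪ interDom Ω lam) (u - utN) ≤
          K / (C₁ ^ 2 * s * (lam - Metric.diam Ω) ^ (2 * s)) * L2NormOn Ω u + E := by
  obtain ⟨M, hM, hcM⟩ := cns_bound n
  set V : ℝ := n * (volume : Measure (Eucl n)).real (Metric.ball 0 1) with hV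
  have hV0 : 0 ≤ V := by positivity
  refine ⟨M * V + 1, by positivity, ?_⟩
  intro s hs Ω hne hΩ hb lam hl f hf hf2 u ut hu hut C₁ hC hcoer utN hutN E hE hEN
  obtain ⟨hc0, hcle⟩ := hcM s hs
  have hs0 : 0 < s := hs.1
  have hl0 : 0 < lam := lt_of_le_of_lt Metric.diam_nonneg hl
  have he : IsTestFun s Ω (u - ut) := test_sub hu.1 hut.1
  have htri := Hs_tri (Ω ∪ interDom Ω lam) he (hut.1.1.sub hutN)
  rw [show u - ut + (ut - utN) = u - utN by abel] at htri
  refine htri.trans (add_le_add ?_ hEN)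
  set e := u - ut with hedef
  obtain ⟨hi1, hw1⟩ := hu.2 e he
  obtain ⟨hi2, hw2⟩ := hut.2 e he
  have hT := T_meas (lam := lam) hΩ
  -- energy identity
  have hB : Bform s (Tset Ω lam) e e = -∫ p in (Tset Ω lam)ᶜ, gagIntegrand s u e p := by
    have h1 : Bform s univ u e = Bform s (Tset Ω lam) ut e := by
      have := hw1.trans hw2.symm
      exact mul_left_cancel₀ (by positivity) this
    have h2 : Bform s univ u e = Bform s (Tset Ω lam) u e +
        ∫ p in (Tset Ω lam)ᶜ, gagIntegrand s u e p := by
      have := integral_add_compl hT hi1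
      unfold Bform
      rw [setIntegral_univ]
      exact this.symm
    have h3 : Bform s (Tset Ω lam) e e =
        Bform s (Tset Ω lam) u e - Bform s (Tset Ω lam) ut e := by
      have := integral_sub hi1.integrableOn hi2
      unfold Bform
      refine Eq.trans ?_ this
      refine integral_congr_ae (Filter.Eventually.of_forall fun p => ?_)
      simp only [gagIntegrand, hedef, Pi.sub_apply]
      ring
    linarith
  have hfar := far_bound hn hs0 hΩ hb hl hu.1 he
  rw [← hV] at hfar
  have hBn : 0 ≤ Bform s (Tset Ω lam) e e := by
    rw [Bform_eq]; exact integral_nonneg fun p => sq_nonneg _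
  set X := HsNorm s (Ω ∪ interDom Ω lam) e with hX
  have hX0 : 0 ≤ X := Real.sqrt_nonneg _
  have hU0 : 0 ≤ L2NormOn Ω u := Real.sqrt_nonneg _
  have heX : L2NormOn Ω e ≤ X := by
    apply Real.sqrt_le_sqrt
    have h1 : ∫ x in Ω, e x ^ 2 ≤ ∫ x in Ω ∪ interDom Ω lam, e x ^ 2 :=
      setIntegral_mono_set he.2.1.integrableOn
        (Filter.Eventually.of_forall fun x => sq_nonneg _)
        (subset_union_left).eventuallyLE
    have h2 : 0 ≤ Bform s ((Ω ∪ interDom Ω lam) ×ˢ (Ω ∪ interDom Ω lam)) e e := by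
      rw [Bform_eq]; exact integral_nonneg fun p => sq_nonneg _
    linarith
  have hco := hcoer e he
  have hsq : (C₁ * X) ^ 2 ≤ cns n s / 4 * Bform s (Tset Ω lam) e e := by
    have := pow_le_pow_left₀ (mul_nonneg hC.le hX0) hco 2
    unfold energyNorm at this
    rwa [Real.sq_sqrt (by positivity)] at this
  have hd : 0 < lam - Metric.diam Ω := by linarith
  set P := (lam - Metric.diam Ω) ^ (2 * s) with hP
  have hP0 : 0 < P := by positivity
  have hlamP : lam ^ (-(2 * s)) ≤ P⁻¹ := by
    rw [Real.rpow_neg hl0.le]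
    have : P ≤ lam ^ (2 * s) :=
      Real.rpow_le_rpow hd.le (by linarith [Metric.diam_nonneg (s := Ω)]) (by positivity)
    gcongr
  have hBle : Bform s (Tset Ω lam) e e ≤ 2 * (L2NormOn Ω u * X) * (V * (P⁻¹ / (2 * s))) := by
    rw [hB]
    refine (neg_le_abs _).trans (hfar.trans ?_)
    gcongr
  have hfin : C₁ ^ 2 * X * X ≤ M / 4 * (L2NormOn Ω u * V * (P⁻¹ / s)) * X := by
    calc C₁ ^ 2 * X * X = (C₁ * X) ^ 2 := by ring
      _ ≤ cns n s / 4 * Bform s (Tset Ω lam) e e := hsq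
      _ ≤ M / 4 * (2 * (L2NormOn Ω u * X) * (V * (P⁻¹ / (2 * s)))) := by gcongr
      _ = _ := by field_simp
  have hgoal : C₁ ^ 2 * X ≤ M / 4 * (L2NormOn Ω u * V * (P⁻¹ / s)) := by
    rcases hX0.eq_or_lt with h | h
    · rw [← h, mul_zero]; positivity
    · exact le_of_mul_le_mul_right hfin h
  have hgoal2 : M / 4 * (L2NormOn Ω u * V * (P⁻¹ / s)) ≤
      (M * V + 1) * (L2NormOn Ω u * (P⁻¹ / s)) := by
    have h0 : 0 ≤ L2NormOn Ω u * (P⁻¹ / s) := by positivity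
    have h1 : 0 ≤ M * V := by positivity
    nlinarith [mul_nonneg h1 h0]
  rw [show (M * V + 1) / (C₁ ^ 2 * s * P) * L2NormOn Ω u =
    ((M * V + 1) * (L2NormOn Ω u * (P⁻¹ / s))) / C₁ ^ 2 by field_simp]
  rw [le_div_iff₀ (by positivity)]
  linarith
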